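/- arXiv:1703.01581 — 3 statements merged into one kernel-verified Lean document; each statement's English description precedes it below -/
import Mathlib

section
/- There exists a finite partition 𝔻 \ {0} = A₁ ∪ A₂ ∪ … ∪ A_r of the nonzero dyadic rationals such that there do not exist i ∈ {1, 2, …, r} and a sequence ⟨xₙ⟩ₙ₌₁^∞ in 𝔻 \ {0} with FS(⟨xₙ⟩ₙ₌₁^∞) ∪ FP(⟨xₙ⟩ₙ₌₁^∞) ⊆ A_i. -/
/-- The dyadic rationals: rationals of the form `a / 2^n` with `a ∈ ℤ`, `n ∈ ℕ`. -/
def DyadicRationals : Set ℚ := {q | ∃ (a : ℤ) (n : ℕ), q = (a : ℚ) / 2 ^ n}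

/-- Finite sums of distinct terms of a sequence of rationals. -/
def FS (x : ℕ → ℚ) : Set ℚ :=
  {s | ∃ H : Finset ℕ, H.Nonempty ∧ s = ∑ t ∈ H, x t}

/-- Finite products of distinct terms of a sequence of rationals. -/
def FP (x : ℕ → ℚ) : Set ℚ :=
  {s | ∃ H : Finset ℕ, H.Nonempty ∧ s = ∏ t ∈ H, x t}

namespace DyadicAux

open Filter Topology

/-- 2-adic valuation. -/
noncomputable def V (q : ℚ) : ℤ := padicValRat 2 q
/-- odd part (for dyadic rationals). -/
noncomputable def W (q : ℚ) : ℤ := (q / (2:ℚ) ^ (V q)).num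
/-- signed distance to the nearest integer. -/
noncomputable def B (z : ℝ) : ℝ := z - round z

lemma V_odd (w : ℤ) (hw : Odd w) : V (w : ℚ) = 0 := by
  unfold V
  rw [padicValRat.of_int]
  have : ¬ (2:ℤ) ∣ w := by
    rw [← even_iff_two_dvd]; exact Int.not_even_iff_odd.mpr hw
  simp [padicValInt.eq_zero_of_not_dvd (p := 2) (by exact_mod_cast this)]

lemma V_two_zpow (k : ℤ) : V ((2:ℚ) ^ k) = k := by
  unfold V
  rw [padicValRat.zpow]
  have : padicValRat 2 (2:ℚ) = 1 := by exact_mod_cast padicValRat.self (p := 2) (by norm_num)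
  rw [this, mul_one]

lemma V_mul {a b : ℚ} (ha : a ≠ 0) (hb : b ≠ 0) : V (a * b) = V a + V b :=
  padicValRat.mul ha hb

lemma odd_cast_ne {w : ℤ} (hw : Odd w) : (w : ℚ) ≠ 0 := by
  rintro h
  have : w = 0 := by exact_mod_cast h
  subst this; simp at hw

lemma V_uniq (w k : ℤ) (hw : Odd w) : V ((w : ℚ) * 2 ^ k) = k := by
  rw [V_mul (odd_cast_ne hw) (by positivity), V_odd w hw, V_two_zpow, zero_add]

lemma W_uniq (w k : ℤ) (hw : Odd w) : W ((w : ℚ) * 2 ^ k) = w := by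
  unfold W
  rw [V_uniq w k hw, mul_div_assoc, div_self (by positivity), mul_one]
  simp

/-- nonzero dyadic -/
def Dy (q : ℚ) : Prop := ∃ w k : ℤ, Odd w ∧ q = (w : ℚ) * 2 ^ k

lemma Dy.ne {q : ℚ} (h : Dy q) : q ≠ 0 := by
  obtain ⟨w, k, hw, rfl⟩ := h
  exact mul_ne_zero (odd_cast_ne hw) (by positivity)

lemma Dy.odd {q : ℚ} (h : Dy q) : Odd (W q) := by
  obtain ⟨w, k, hw, rfl⟩ := h
  rwa [W_uniq w k hw]

lemma Dy.eq {q : ℚ} (h : Dy q) : q = (W q : ℚ) * 2 ^ (V q) := by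
  obtain ⟨w, k, hw, rfl⟩ := h
  rw [W_uniq w k hw, V_uniq w k hw]

lemma dy_int (a : ℤ) (ha : a ≠ 0) : Dy (a : ℚ) := by
  obtain ⟨n, w, hw, h⟩ := Nat.exists_eq_two_pow_mul_odd (Int.natAbs_ne_zero.2 ha)
  have hw' : Odd (w : ℤ) := by exact_mod_cast hw
  rcases Int.natAbs_eq a with h' | h'
  · refine ⟨w, n, hw', ?_⟩
    rw [h', h]; push_cast; rw [zpow_natCast]; ring
  · refine ⟨-w, n, hw'.neg, ?_⟩
    rw [h', h]; push_cast; rw [zpow_natCast]; ring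

lemma dy_of_mem {q : ℚ} (h : q ∈ DyadicRationals \ {0}) : Dy q := by
  obtain ⟨⟨a, n, rfl⟩, h0⟩ := h
  have ha : a ≠ 0 := by
    rintro rfl; simp at h0
  obtain ⟨w, k, hw, h⟩ := dy_int a ha
  refine ⟨w, k - n, hw, ?_⟩
  rw [h, zpow_sub₀ (by norm_num), zpow_natCast]; ring

lemma Dy.mul {a b : ℚ} (ha : Dy a) (hb : Dy b) : Dy (a * b) := by
  obtain ⟨w, k, hw, rfl⟩ := ha
  obtain ⟨w', k', hw', rfl⟩ := hb
  refine ⟨w * w', k + k', hw.mul hw', ?_⟩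
  rw [zpow_add₀ (by norm_num)]; push_cast; ring

lemma W_mul {a b : ℚ} (ha : Dy a) (hb : Dy b) : W (a * b) = W a * W b := by
  obtain ⟨w, k, hw, rfl⟩ := ha
  obtain ⟨w', k', hw', rfl⟩ := hb
  rw [W_uniq _ _ hw, W_uniq _ _ hw', ← W_uniq (w * w') (k + k') (hw.mul hw')]
  congr 1
  rw [zpow_add₀ (by norm_num)]; push_cast; ring

/-- Sum of two with the same valuation and same unit mod 4. -/
lemma V_add_same {a b : ℚ} (ha : Dy a) (hb : Dy b) (hV : V a = V b)
    (hW : W a % 4 = 1 ↔ W b % 4 = 1) : V (a + b) = V a + 1 := by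
  have oa := ha.odd
  have ob := hb.odd
  obtain ⟨c, hc⟩ : ∃ c : ℤ, W a + W b = 2 * c ∧ Odd c := by
    refine ⟨(W a + W b) / 2, ?_, ?_⟩
    · rw [Int.odd_iff] at oa ob; omega
    · rw [Int.odd_iff] at *; omega
  have : a + b = (c : ℚ) * 2 ^ (V a + 1) := by
    have h1 := ha.eq
    have h2 := hb.eq
    rw [← hV] at h2
    have h3 : (W a : ℚ) + W b = 2 * c := by exact_mod_cast hc.1
    rw [zpow_add₀ (by norm_num), zpow_one]
    calc a + b = W a * 2 ^ V a + W b * 2 ^ V a := by rw [← h1, ← h2]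
      _ = (W a + W b) * 2 ^ V a := by ring
      _ = _ := by rw [h3]; ring
  rw [this, V_uniq _ _ hc.2]

lemma V_add_lt {a b : ℚ} (ha : Dy a) (hb : Dy b) (h : V a < V b) :
    V (a + b) = V a ∧ W (a + b) = W a + W b * 2 ^ (V b - V a).toNat := by
  obtain ⟨d, hd⟩ : ∃ d : ℕ, V b = V a + d := ⟨(V b - V a).toNat, by omega⟩
  have hd0 : d ≠ 0 := by omega
  have e : (V b - V a).toNat = d := by omega
  rw [e]
  have ho : Odd (W a + W b * 2 ^ d) := by
    apply ha.odd.add_even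
    exact Even.mul_left (Even.pow_of_ne_zero (by decide) hd0) _
  have : a + b = ((W a + W b * 2 ^ d : ℤ) : ℚ) * 2 ^ V a := by
    have h1 := ha.eq
    have h2 := hb.eq
    rw [hd, zpow_add₀ (by norm_num), zpow_natCast] at h2
    push_cast
    calc a + b = W a * 2 ^ V a + W b * (2 ^ V a * 2 ^ d) := by rw [← h1, ← h2]
      _ = _ := by ring
  constructor
  · rw [this, V_uniq _ _ ho]
  · rw [this, W_uniq _ _ ho]

lemma inj_lt {f : ℕ → ℤ} (hf : ∀ n m, n ≠ m → f n ≠ f m) {C : ℤ} (hC : ∀ n, f n ≤ C) (K : ℤ) :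
    ∀ᶠ n in atTop, f n < K := by
  have hi : Function.Injective f := fun n m h => by
    by_contra hne; exact hf n m hne h
  have hfin : (f ⁻¹' (Set.Icc K C)).Finite := (Set.finite_Icc K C).preimage hi.injOn
  have := hfin.compl_mem_cofinite
  rw [Nat.cofinite_eq_atTop] at this
  filter_upwards [this] with n hn
  by_contra h
  exact hn ⟨by omega, hC n⟩

lemma inj_gt {f : ℕ → ℤ} (hf : ∀ n m, n ≠ m → f n ≠ f m) {C : ℤ} (hC : ∀ n, C ≤ f n) (K : ℤ) :
    ∀ᶠ n in atTop, K < f n := by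
  have := inj_lt (f := fun n => - f n) (fun n m h => by have := hf n m h; omega) (C := -C)
    (fun n => by have := hC n; omega) (-K)
  filter_upwards [this] with n hn
  omega

lemma B_bounds (z : ℝ) : -(1/2) ≤ B z ∧ B z < 1/2 := by
  unfold B
  rw [round_eq]
  have h1 := Int.floor_le (z + 1/2)
  have h2 := Int.lt_floor_add_one (z + 1/2)
  constructor <;> linarith

lemma round_uniq {z : ℝ} {k : ℤ} (h1 : -(1/2) ≤ z - k) (h2 : z - k < 1/2) : round z = k := by
  rw [round_eq, Int.floor_eq_iff]
  constructor <;> linarith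

lemma B_add {y z : ℝ} (hs : 0 < B y ↔ 0 < B z) (hs' : 0 < B (y + z) ↔ 0 < B y)
    (h0 : B y ≠ 0) (h1 : B z ≠ 0) (h2 : B (y + z) ≠ 0) :
    round (y + z) = round y + round z ∧ B (y + z) = B y + B z ∧
      |B (y + z)| = |B y| + |B z| := by
  have by_ := B_bounds y
  have bz := B_bounds z
  have key : round (y + z) = round y + round z := by
    by_contra hne
    rcases lt_or_gt_of_ne h0 with hy | hy
    · have hz : B z < 0 := by
        rcases lt_or_gt_of_ne h1 with h | h
        · exact h
        · have := hs.2 h; linarith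
      have hyz : B (y+z) < 0 := by
        rcases lt_or_gt_of_ne h2 with h | h
        · exact h
        · have := hs'.1 h; linarith
      by_cases hc : -(1/2) ≤ B y + B z
      · apply hne; apply round_uniq <;> push_cast <;> unfold B at * <;> linarith
      · have : round (y + z) = round y + round z - 1 := by
          apply round_uniq <;> push_cast <;> unfold B at * <;> linarith
        unfold B at *
        rw [this] at hyz; push_cast at hyz; linarith
    · have hz := hs.1 hy
      have hyz := hs'.2 hy
      by_cases hc : B y + B z < 1/2
      · apply hne; apply round_uniq <;> push_cast <;> unfold B at * <;> linarith
      · have : round (y + z) = round y + round z + 1 := by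
          apply round_uniq <;> push_cast <;> unfold B at * <;> linarith
        unfold B at *
        rw [this] at hyz; push_cast at hyz; linarith
  have k2 : B (y + z) = B y + B z := by
    unfold B; rw [key]; push_cast; ring
  refine ⟨key, k2, ?_⟩
  rw [k2]
  rcases lt_or_gt_of_ne h0 with hy | hy
  · have hz : B z < 0 := by
      rcases lt_or_gt_of_ne h1 with h | h
      · exact h
      · have := hs.2 h; linarith
    rw [abs_of_neg hy, abs_of_neg hz, abs_of_neg (by linarith)]; ring
  · have hz := hs.1 hy
    rw [abs_of_pos hy, abs_of_pos hz, abs_of_pos (by linarith)]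

lemma log_add_same {a b : ℝ} (ha : 0 < a) (hb : 0 < b) (h : Int.log 2 a = Int.log 2 b) :
    Int.log 2 (a + b) = Int.log 2 a + 1 := by
  have a1 := Int.zpow_log_le_self (b := 2) (by norm_num) ha
  have b1 := Int.zpow_log_le_self (b := 2) (by norm_num) hb
  have a2 := Int.lt_zpow_succ_log_self (b := 2) (by norm_num) a
  have b2 := Int.lt_zpow_succ_log_self (b := 2) (by norm_num) b
  rw [← h] at b1 b2
  push_cast at *
  have e1 : (2:ℝ) ^ (Int.log 2 a + 1) = 2 * 2 ^ (Int.log 2 a) := by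
    rw [zpow_add₀ (by norm_num)]; ring
  have e2 : (2:ℝ) ^ (Int.log 2 a + 1 + 1) = 2 * 2 ^ (Int.log 2 a + 1) := by
    rw [zpow_add₀ (by norm_num)]; ring
  apply le_antisymm
  · have : Int.log 2 (a + b) < Int.log 2 a + 1 + 1 := by
      rw [← Int.lt_zpow_iff_log_lt (by norm_num) (by positivity)]
      push_cast; linarith
    omega
  · rw [← Int.zpow_le_iff_le_log (by norm_num) (by positivity)]
    push_cast; linarith

/-- The three bits of a real. -/
noncomputable def S (z : ℝ) : Prop × Prop × Prop := (B z = 0, 0 < B z, Even (Int.log 2 |B z|))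

lemma frac {z : ℕ → ℝ} (h0 : ∀ n, B (z n) ≠ 0) (h1 : ∀ n m, S (z n) = S (z m))
    (h2 : ∀ n m, n ≠ m → S (z n + z m) = S (z n)) :
    (∀ n m, n ≠ m → round (z n + z m) = round (z n) + round (z m) ∧
      |B (z n + z m)| = |B (z n)| + |B (z m)|) ∧
    ∀ ε > 0, ∀ᶠ n in atTop, |B (z n)| < ε := by
  have key : ∀ n m, n ≠ m → round (z n + z m) = round (z n) + round (z m) ∧
      |B (z n + z m)| = |B (z n)| + |B (z m)| := by
    intro n m hnm
    have e1 := h1 n m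
    have e2 := h2 n m hnm
    simp only [S, Prod.mk.injEq, eq_iff_iff] at e1 e2
    have := B_add e1.2.1 e2.2.1 (h0 n) (h0 m) (fun h => h0 n (e2.1.1 h))
    exact ⟨this.1, this.2.2⟩
  refine ⟨key, ?_⟩
  have inj : ∀ n m, n ≠ m → Int.log 2 |B (z n)| ≠ Int.log 2 |B (z m)| := by
    intro n m hnm he
    have e2 := h2 n m hnm
    simp only [S, Prod.mk.injEq, eq_iff_iff] at e2
    have e3 := e2.2.2
    rw [(key n m hnm).2, log_add_same (abs_pos.2 (h0 n)) (abs_pos.2 (h0 m)) he,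
      Int.even_add_one] at e3
    tauto
  intro ε hε
  have bd : ∀ n, Int.log 2 |B (z n)| ≤ 0 := by
    intro n
    have : Int.log 2 |B (z n)| < 1 := by
      rw [← Int.lt_zpow_iff_log_lt (by norm_num) (abs_pos.2 (h0 n))]
      have := B_bounds (z n)
      rw [abs_lt]; constructor <;> norm_num <;> linarith
    omega
  filter_upwards [inj_lt inj bd (Int.log 2 ε)] with n hn
  rw [← Int.lt_zpow_iff_log_lt (by norm_num) (abs_pos.2 (h0 n))] at hn
  exact hn.trans_le (Int.zpow_log_le_self (by norm_num) hε)

/-- level of the odd part -/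
noncomputable def l (x : ℚ) : ℤ := V ((W x - 1 : ℤ) : ℚ)

noncomputable def T (q : ℚ) : Prop × Prop × Prop := (q = 0, Even (V q), W q % 4 = 1)

noncomputable def Lg (x : ℚ) : ℝ := Real.logb 2 |(x : ℝ)|

noncomputable def col (x : ℚ) : (Prop × Prop × Prop) × (Prop × Prop × Prop) × (Prop × Prop × Prop)
    × (Prop × Prop × Prop) × (Prop × Prop × Prop) × Prop × Prop :=
  (T x, T ((W x - 1 : ℤ) : ℚ), T ((round (x:ℝ) : ℤ) : ℚ), S x, S (Lg x),
    |B x| * 2 ^ (l x) < 1, |B (Lg x)| * 2 ^ (V x) < 1)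

lemma T_inj {a b : ℚ} (ha : Dy a) (hb : Dy b) (h1 : T a = T b) (h2 : T (a + b) = T a) :
    V a ≠ V b := by
  intro h
  simp only [T, Prod.mk.injEq, eq_iff_iff] at h1 h2
  have := V_add_same ha hb h h1.2.2
  rw [this, Int.even_add_one] at h2
  tauto

lemma V_int_nonneg (a : ℤ) : 0 ≤ V (a : ℚ) := by
  unfold V; rw [padicValRat.of_int]; positivity

lemma int_of_V {q : ℚ} (h : Dy q) (hV : 0 ≤ V q) : ∃ a : ℤ, q = a := by
  obtain ⟨n, hn⟩ := Int.eq_ofNat_of_zero_le hV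
  refine ⟨W q * 2 ^ n, ?_⟩
  have := h.eq
  rw [hn] at this
  push_cast
  exact_mod_cast this

lemma exists_zpow_ge (r : ℝ) : ∃ K : ℕ, r < 2 ^ K := pow_unbounded_of_one_lt r (by norm_num)

theorem no_seq (x : ℕ → ℚ) (hx : ∀ n, Dy (x n)) (hadd : ∀ n m, n ≠ m → Dy (x n + x m))
    (h1 : ∀ n m, col (x n) = col (x m))
    (h2 : ∀ n m, n ≠ m → col (x n + x m) = col (x n))
    (h3 : ∀ n m, n ≠ m → col (x n * x m) = col (x n)) : False := by
  simp only [col, Prod.mk.injEq] at h1 h2 h3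
  -- injectivity of V
  have Vinj : ∀ n m, n ≠ m → V (x n) ≠ V (x m) := fun n m h =>
    T_inj (hx n) (hx m) (h1 n m).1 (h2 n m h).1
  -- W ≡ 1 mod 4
  have W4 : ∀ n, W (x n) % 4 = 1 := by
    intro n
    by_contra hn
    have e1 := (h1 n (n+1)).1
    have e3 := (h3 n (n+1) (by omega)).1
    simp only [T, Prod.mk.injEq, eq_iff_iff] at e1 e3
    have o1 := Int.odd_iff.1 (hx n).odd
    have o2 := Int.odd_iff.1 (hx (n+1)).odd
    have a1 : W (x n) % 4 = 3 := by omega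
    have a2 : W (x (n+1)) % 4 = 3 := by
      have : ¬ W (x (n+1)) % 4 = 1 := fun h => hn (e1.2.2.2 h)
      omega
    apply hn
    apply e3.2.2.1
    rw [W_mul (hx _) (hx _), Int.mul_emod, a1, a2]; rfl
  -- W ≠ 1
  have W1 : ∀ n, W (x n) ≠ 1 := by
    intro n hn
    have W1' : ∀ m, W (x m) = 1 := by
      intro m
      have e1 := (h1 n m).2.1
      simp only [T, Prod.mk.injEq, eq_iff_iff] at e1
      have := e1.1.1 (by simp [hn])
      have : W (x m) - 1 = 0 := by exact_mod_cast this
      omega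
    have key : ∀ a b, V (x a) < V (x b) → False := by
      intro a b hab
      have hne : a ≠ b := by rintro rfl; omega
      have e2 := (h2 a b hne).2.1
      simp only [T, Prod.mk.injEq, eq_iff_iff] at e2
      have := e2.1.2 (by simp [W1'])
      have h4 : W (x a + x b) - 1 = 0 := by exact_mod_cast this
      rw [(V_add_lt (hx a) (hx b) hab).2, W1', W1'] at h4
      have : (0:ℤ) < 2 ^ (V (x b) - V (x a)).toNat := by positivity
      omega
    rcases lt_or_gt_of_ne (Vinj 0 1 (by omega)) with h | h
    · exact key _ _ h
    · exact key _ _ h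
  have dW : ∀ n, Dy ((W (x n) - 1 : ℤ) : ℚ) := fun n => dy_int _ (by have := W1 n; omega)
  -- products: auxiliary element a = (W n - 1) * W m
  have dWo : ∀ n, Dy ((W (x n) : ℤ) : ℚ) := fun n => ⟨W (x n), 0, (hx n).odd, by simp⟩
  have VW0 : ∀ n, V ((W (x n) : ℤ) : ℚ) = 0 := fun n => V_odd _ (hx n).odd
  have WW : ∀ n, W ((W (x n) : ℤ) : ℚ) = W (x n) := fun n => by
    have := W_uniq (W (x n)) 0 (hx n).odd
    simpa using this
  have Va : ∀ n m, V (((W (x n) - 1 : ℤ) : ℚ) * ((W (x m) : ℤ) : ℚ)) = l (x n) := by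
    intro n m
    rw [V_mul (dW n).ne (dWo m).ne, VW0, add_zero]; rfl
  have prodW : ∀ n m, ((W (x n * x m) - 1 : ℤ) : ℚ) =
      ((W (x n) - 1 : ℤ) : ℚ) * ((W (x m) : ℤ) : ℚ) + ((W (x m) - 1 : ℤ) : ℚ) := by
    intro n m
    rw [W_mul (hx n) (hx m)]; push_cast; ring
  have linj : ∀ n m, n ≠ m → l (x n) ≠ l (x m) := by
    intro n m hnm he
    have e1 := (h1 n m).2.1
    have e3 := (h3 n m hnm).2.1
    simp only [T, Prod.mk.injEq, eq_iff_iff] at e1 e3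
    have h4 : W (((W (x n) - 1 : ℤ) : ℚ) * ((W (x m) : ℤ) : ℚ)) % 4 =
        W ((W (x n) - 1 : ℤ) : ℚ) % 4 := by
      rw [W_mul (dW n) (dWo m), WW, Int.mul_emod, W4 m]; simp
    have := V_add_same ((dW n).mul (dWo m)) (dW m) (by rw [Va]; exact he)
      (by rw [h4]; exact e1.2.2)
    rw [← prodW, Va] at this
    rw [this, Int.even_add_one] at e3
    exact iff_not_self (e3.2.1.symm)
  have lprod : ∀ n m, l (x n) < l (x m) → l (x n * x m) = l (x n) := by
    intro n m h
    have := (V_add_lt ((dW n).mul (dWo m)) (dW m) (by rw [Va]; exact h)).1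
    rw [← prodW, Va] at this
    exact this
  by_cases hB : B (x 0 : ℝ) = 0
  · -- integers
    have hB' : ∀ n, B (x n : ℝ) = 0 := by
      intro n
      have e1 := (h1 n 0).2.2.2.1
      simp only [S, Prod.mk.injEq, eq_iff_iff] at e1
      exact e1.1.2 hB
    have hint : ∀ n, ∃ a : ℤ, x n = a := by
      intro n
      refine ⟨round (x n : ℝ), ?_⟩
      have := hB' n
      unfold B at this
      have h : (x n : ℝ) = ((round (x n : ℝ) : ℤ) : ℝ) := by linarith
      exact_mod_cast h
    have Vnn : ∀ n, 0 ≤ V (x n) := by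
      intro n
      obtain ⟨a, ha⟩ := hint n
      rw [ha]; exact V_int_nonneg a
    have Vbig := fun K => inj_gt Vinj Vnn K
    have xne : ∀ n, (x n : ℝ) ≠ 0 := fun n => by exact_mod_cast (hx n).ne
    have hL0 : ∀ n, B (Lg (x n)) ≠ 0 := by
      intro n hn
      unfold B Lg at hn
      set k := round (Real.logb 2 |(x n : ℝ)|)
      have hk : Real.logb 2 |(x n : ℝ)| = k := by linarith
      have h5 : |(x n : ℝ)| = 2 ^ k := by
        rw [← Real.rpow_intCast, ← hk, Real.rpow_logb (by norm_num) (by norm_num)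
          (abs_pos.2 (xne n))]
      have h6 : |x n| = (2:ℚ) ^ k := by
        have h5' : ((|x n| : ℚ) : ℝ) = (((2:ℚ) ^ k : ℚ) : ℝ) := by push_cast; exact h5
        exact_mod_cast h5'
      rcases abs_eq (by positivity) |>.1 h6 with h | h
      · have := W_uniq 1 k (by decide)
        rw [Int.cast_one, one_mul, ← h] at this
        exact W1 n this
      · have := W_uniq (-1) k (by decide)
        rw [Int.cast_neg, Int.cast_one, neg_one_mul, ← h] at this
        have h7 := W4 n
        rw [this] at h7; norm_num at h7
    have Lmul : ∀ n m, Lg (x n * x m) = Lg (x n) + Lg (x m) := by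
      intro n m
      unfold Lg
      push_cast
      rw [abs_mul, Real.logb_mul (abs_ne_zero.2 (xne n)) (abs_ne_zero.2 (xne m))]
    obtain ⟨f1, f2⟩ := frac (z := fun n => Lg (x n)) hL0 (fun n m => (h1 n m).2.2.2.2.1)
      (fun n m h => by rw [← Lmul]; exact (h3 n m h).2.2.2.2.1)
    -- constants
    have tend : Tendsto (fun t : ℝ => Real.logb 2 |1 + t|) (𝓝 0) (𝓝 0) := by
      have : ContinuousAt (fun t : ℝ => Real.logb 2 |1 + t|) 0 := by
        unfold Real.logb
        apply ContinuousAt.div_const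
        apply ContinuousAt.log
        · fun_prop
        · simp
      simpa [ContinuousAt] using this
    set ε : ℝ := (2 ^ (V (x 0)))⁻¹ / 2 with hε
    have εpos : 0 < ε := by positivity
    obtain ⟨δ, δpos, hδ⟩ := Metric.tendsto_nhds_nhds.1 tend ε εpos
    obtain ⟨K1, hK1⟩ := exists_zpow_ge (|(x 0 : ℝ)| / δ)
    obtain ⟨K2, hK2⟩ := exists_zpow_ge (|B (Lg (x 0))|⁻¹)
    obtain ⟨m, m1, m2, m3, m4, m5⟩ := ((f2 ε εpos).and ((Vbig K1).and ((Vbig K2).and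
      ((Vbig (V (x 0))).and (eventually_gt_atTop 0))))).exists
    have h0m : (0:ℕ) ≠ m := by omega
    have q : (|B (Lg (x 0 + x m))| * 2 ^ (V (x 0 + x m)) < 1) =
      (|B (Lg (x 0 * x m))| * 2 ^ (V (x 0 * x m)) < 1) :=
      ((h2 0 m h0m).2.2.2.2.2.2).trans ((h3 0 m h0m).2.2.2.2.2.2).symm
    have qT : |B (Lg (x 0 + x m))| * 2 ^ (V (x 0 + x m)) < 1 := by
      rw [(V_add_lt (hx 0) (hx m) m4).1]
      have hbig : (2:ℝ) ^ K1 ≤ |(x m : ℝ)| := by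
        obtain ⟨d, hd⟩ : ∃ d : ℕ, V (x m) = K1 + d := ⟨(V (x m) - K1).toNat, by omega⟩
        have e := (hx m).eq
        rw [hd, zpow_add₀ (by norm_num), zpow_natCast, zpow_natCast] at e
        have e' : (x m : ℝ) = W (x m) * (2 ^ K1 * 2 ^ d) := by exact_mod_cast e
        rw [e', abs_mul, abs_of_pos (a := (2:ℝ) ^ K1 * 2 ^ d) (by positivity)]
        have w1 : (1:ℝ) ≤ |(W (x m) : ℝ)| := by
          have : W (x m) ≠ 0 := by
            intro h; have := (hx m).odd; rw [h] at this; simp at this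
          exact_mod_cast Int.one_le_abs this
        have d1 : (1:ℝ) ≤ 2 ^ d := one_le_pow₀ (by norm_num)
        have p1 : (0:ℝ) < 2 ^ K1 := by positivity
        nlinarith [mul_le_mul_of_nonneg_left d1 p1.le, mul_le_mul w1 d1 zero_le_one (abs_nonneg _)]
      have hsmall : |(x 0 : ℝ) / x m| < δ := by
        rw [abs_div, div_lt_iff₀ (abs_pos.2 (xne m))]
        rw [div_lt_iff₀ δpos] at hK1
        nlinarith
      have hl := hδ (x := (x 0 : ℝ) / x m) (by rw [Real.dist_eq, sub_zero]; exact hsmall)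
      rw [Real.dist_eq, sub_zero] at hl
      have hsum : Lg (x 0 + x m) = Lg (x m) + Real.logb 2 |1 + (x 0 : ℝ) / x m| := by
        have hne : ((x 0 : ℝ) + x m) ≠ 0 := by exact_mod_cast (hadd 0 m h0m).ne
        have e : ((x 0 : ℝ) + x m) = x m * (1 + (x 0 : ℝ) / x m) := by
          have := xne m
          field_simp; ring
        have hne2 : (1 + (x 0 : ℝ) / x m) ≠ 0 := by
          intro h; rw [h, mul_zero] at e; exact hne e
        unfold Lg
        push_cast
        rw [e, abs_mul, Real.logb_mul (abs_ne_zero.2 (xne m)) (abs_ne_zero.2 hne2)]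
      have hb : |B (Lg (x 0 + x m))| < 2 * ε := by
        have r := round_le (Lg (x 0 + x m)) (round (Lg (x m)))
        have r2 : Lg (x 0 + x m) - round (Lg (x m)) =
          B (Lg (x m)) + Real.logb 2 |1 + (x 0 : ℝ) / x m| := by
          rw [hsum]; unfold B; ring
        rw [r2] at r
        have := abs_add_le (B (Lg (x m))) (Real.logb 2 |1 + (x 0 : ℝ) / x m|)
        have u : |B (Lg (x 0 + x m))| = |Lg (x 0 + x m) - round (Lg (x 0 + x m))| := rfl
        linarith
      have : (0:ℝ) < 2 ^ V (x 0) := by positivity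
      calc |B (Lg (x 0 + x m))| * 2 ^ V (x 0) < 2 * ε * 2 ^ V (x 0) := by gcongr
        _ = 1 := by rw [hε]; field_simp
    rw [q, V_mul (hx 0).ne (hx m).ne, Lmul, (f1 0 m h0m).2] at qT
    have b0 : 0 < |B (Lg (x 0))| := abs_pos.2 (hL0 0)
    have hp : (2:ℝ) ^ K2 ≤ 2 ^ (V (x 0) + V (x m)) := by
      rw [← zpow_natCast]
      apply zpow_le_zpow_right₀ (by norm_num)
      have := Vnn 0
      omega
    have : 1 < |B (Lg (x 0))| * 2 ^ K2 := by
      rw [inv_lt_iff_one_lt_mul₀ b0] at hK2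
      linarith
    have h8 : |B (Lg (x 0))| * 2 ^ K2 ≤
      (|B (Lg (x 0))| + |B (Lg (x m))|) * 2 ^ (V (x 0) + V (x m)) := by
      gcongr
      have := abs_nonneg (B (Lg (x m)))
      linarith
    linarith
  · -- non-integers
    have hB' : ∀ n, B (x n : ℝ) ≠ 0 := by
      intro n hn
      have e1 := (h1 n 0).2.2.2.1
      simp only [S, Prod.mk.injEq, eq_iff_iff] at e1
      exact hB (e1.1.1 hn)
    have Vneg : ∀ n, V (x n) ≤ 0 := by
      intro n
      by_contra h
      obtain ⟨a, ha⟩ := int_of_V (hx n) (by omega)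
      apply hB' n
      rw [ha]; unfold B; simp
    have Vsmall := fun K => inj_lt Vinj Vneg K
    have lnn : ∀ n, 0 ≤ l (x n) := fun n => V_int_nonneg _
    have lbig := fun K => inj_gt linj lnn K
    obtain ⟨f1, f2⟩ := frac (z := fun n => (x n : ℝ)) hB' (fun n m => (h1 n m).2.2.2.1)
      (fun n m h => by
        have := (h2 n m h).2.2.2.1
        push_cast at this; exact this)
    -- the integer parts
    have ra : ∀ K : ℤ, ∀ᶠ n in atTop, round (x n : ℝ) = 0 ∨
        K < V ((round (x n : ℝ) : ℤ) : ℚ) := by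
      by_cases hr : round (x 0 : ℝ) = 0
      · intro K
        refine Eventually.of_forall fun n => Or.inl ?_
        have e1 := (h1 0 n).2.2.1
        simp only [T, Prod.mk.injEq, eq_iff_iff] at e1
        exact_mod_cast e1.1.1 (by exact_mod_cast hr)
      · have hr' : ∀ n, round (x n : ℝ) ≠ 0 := by
          intro n hn
          have e1 := (h1 0 n).2.2.1
          simp only [T, Prod.mk.injEq, eq_iff_iff] at e1
          apply hr
          exact_mod_cast e1.1.2 (by exact_mod_cast hn)
        have rinj : ∀ n m, n ≠ m → V ((round (x n : ℝ) : ℤ) : ℚ) ≠ V ((round (x m : ℝ) : ℤ) : ℚ) := by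
          intro n m h
          apply T_inj (dy_int _ (hr' n)) (dy_int _ (hr' m)) (h1 n m).2.2.1
          have e := (h2 n m h).2.2.1
          have e' := (f1 n m h).1
          push_cast at e
          rw [e'] at e
          push_cast at e
          exact e
        intro K
        filter_upwards [inj_gt rinj (fun n => V_int_nonneg _) K] with n hn
        exact Or.inr hn
    have x0 : (0:ℝ) < |(x 0 : ℝ)| := abs_pos.2 (by exact_mod_cast (hx 0).ne)
    set ε : ℝ := (2 ^ (l (x 0)))⁻¹ / |(x 0 : ℝ)| with hε
    have εpos : 0 < ε := by positivity
    have b0 : 0 < |B (x 0 : ℝ)| := abs_pos.2 (hB' 0)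
    obtain ⟨K, hK⟩ := exists_zpow_ge (|B (x 0 : ℝ)|⁻¹)
    obtain ⟨m, m1, m2, m3, m4, m5, m6, m7⟩ := ((f2 ε εpos).and ((lbig K).and
      ((Vsmall (V (x 0) - K)).and
      ((ra (- V (x 0))).and ((lbig (l (x 0))).and ((Vsmall (V (x 0))).and
        (eventually_gt_atTop 0))))))).exists
    have h0m : (0:ℕ) ≠ m := by omega
    have p : (|B ((x 0 + x m : ℚ) : ℝ)| * 2 ^ (l (x 0 + x m)) < 1) =
      (|B ((x 0 * x m : ℚ) : ℝ)| * 2 ^ (l (x 0 * x m)) < 1) :=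
      ((h2 0 m h0m).2.2.2.2.2.1).trans ((h3 0 m h0m).2.2.2.2.2.1).symm
    have pT : |B ((x 0 * x m : ℚ) : ℝ)| * 2 ^ (l (x 0 * x m)) < 1 := by
      rw [lprod 0 m m5]
      obtain ⟨c, hc⟩ : ∃ c : ℤ, x 0 * ((round (x m : ℝ) : ℤ) : ℚ) = c := by
        by_cases hr : round (x m : ℝ) = 0
        · exact ⟨0, by rw [hr]; simp⟩
        · have h := m4.resolve_left hr
          apply int_of_V ((hx 0).mul (dy_int _ hr))
          rw [V_mul (hx 0).ne (dy_int _ hr).ne]; omega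
      have hc' : (x 0 : ℝ) * (round (x m : ℝ) : ℝ) = c := by exact_mod_cast hc
      have r := round_le ((x 0 * x m : ℚ) : ℝ) c
      have r2 : ((x 0 * x m : ℚ) : ℝ) - c = x 0 * B (x m : ℝ) := by
        rw [← hc']; unfold B; push_cast; ring
      rw [r2, abs_mul] at r
      have hp : (0:ℝ) < 2 ^ l (x 0) := by positivity
      calc |B ((x 0 * x m : ℚ) : ℝ)| * 2 ^ l (x 0)
          ≤ |(x 0 : ℝ)| * |B (x m : ℝ)| * 2 ^ l (x 0) := by gcongr; exact r
        _ < |(x 0 : ℝ)| * ε * 2 ^ l (x 0) := by gcongr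
        _ = 1 := by rw [hε]; field_simp
    rw [← p] at pT
    have hl : (K : ℤ) ≤ l (x 0 + x m) := by
      have e2 := (h2 0 m h0m).2.1
      simp only [T, Prod.mk.injEq, eq_iff_iff] at e2
      have hne : ((W (x 0 + x m) - 1 : ℤ) : ℚ) ≠ 0 := fun h => (dW 0).ne (e2.1.1 h)
      have hW := (V_add_lt (hx m) (hx 0) m6).2
      rw [add_comm (x m)] at hW
      have e : ((W (x 0 + x m) - 1 : ℤ) : ℚ) = ((W (x m) - 1 : ℤ) : ℚ) +
          ((W (x 0) : ℤ) : ℚ) * 2 ^ (((V (x 0) - V (x m)).toNat : ℕ) : ℤ) := by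
        rw [hW, zpow_natCast]; push_cast; ring
      have hmin := padicValRat.min_le_padicValRat_add (p := 2) (e ▸ hne)
      rw [← e] at hmin
      have v2 := V_uniq (W (x 0)) (((V (x 0) - V (x m)).toNat : ℕ) : ℤ) (hx 0).odd
      change min (l (x m)) (V _) ≤ l (x 0 + x m) at hmin
      rw [v2] at hmin
      have := min_le_iff.1 hmin
      omega
    have f := (f1 0 m h0m).2
    rw [show ((x 0 + x m : ℚ) : ℝ) = (x 0 : ℝ) + x m by push_cast; rfl, f] at pT
    have hp : (2:ℝ) ^ K ≤ 2 ^ (l (x 0 + x m)) := by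
      rw [← zpow_natCast]
      exact zpow_le_zpow_right₀ (by norm_num) hl
    have : 1 < |B (x 0 : ℝ)| * 2 ^ K := by
      rw [inv_lt_iff_one_lt_mul₀ b0] at hK
      linarith
    have h8 : |B (x 0 : ℝ)| * 2 ^ K ≤
      (|B (x 0 : ℝ)| + |B (x m : ℝ)|) * 2 ^ (l (x 0 + x m)) := by
      gcongr
      have := abs_nonneg (B (x m : ℝ))
      linarith
    linarith

end DyadicAux

/-- There is a finite partition `𝔻 \ {0} = A₁ ∪ … ∪ A_r` of the nonzero
dyadic rationals such that no cell `A_i` contains `FS(⟨xₙ⟩) ∪ FP(⟨xₙ⟩)` for any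
sequence `⟨xₙ⟩` in `𝔻 \ {0}`. -/
theorem dyadic_no_combined_FS_FP :
    ∃ (r : ℕ) (A : Fin r → Set ℚ),
      (∀ i, A i ⊆ DyadicRationals \ {0}) ∧
      (∀ q ∈ DyadicRationals \ {0}, ∃ i, q ∈ A i) ∧
      ¬ ∃ (i : Fin r) (x : ℕ → ℚ), (∀ n, x n ∈ DyadicRationals \ {0}) ∧
          FS x ∪ FP x ⊆ A i := by
  obtain ⟨r, ⟨e⟩⟩ := Finite.exists_equiv_fin ((Prop × Prop × Prop) × (Prop × Prop × Prop) ×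
    (Prop × Prop × Prop) × (Prop × Prop × Prop) × (Prop × Prop × Prop) × Prop × Prop)
  refine ⟨r, fun i => {q | q ∈ DyadicRationals \ {0} ∧ e (DyadicAux.col q) = i}, ?_, ?_, ?_⟩
  · intro i q hq; exact hq.1
  · intro q hq; exact ⟨_, hq, rfl⟩
  · rintro ⟨i, x, hx, hsub⟩
    have c1 : ∀ n, e (DyadicAux.col (x n)) = i := fun n =>
      (hsub (Or.inl ⟨{n}, by simp, by simp⟩)).2
    have c2 : ∀ n m, n ≠ m → (x n + x m ∈ DyadicRationals \ {0} ∧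
        e (DyadicAux.col (x n + x m)) = i) := fun n m h =>
      hsub (Or.inl ⟨{n, m}, by simp, by rw [Finset.sum_pair h]⟩)
    have c3 : ∀ n m, n ≠ m → e (DyadicAux.col (x n * x m)) = i := fun n m h =>
      (hsub (Or.inr ⟨{n, m}, by simp, by rw [Finset.prod_pair h]⟩)).2
    exact DyadicAux.no_seq x (fun n => DyadicAux.dy_of_mem (hx n))
      (fun n m h => DyadicAux.dy_of_mem (c2 n m h).1)
      (fun n m => e.injective ((c1 n).trans (c1 m).symm))
      (fun n m h => e.injective ((c2 n m h).2.trans (c1 n).symm))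
      (fun n m h => e.injective ((c3 n m h).trans (c1 n).symm))
end

section
/- Let S be a dense subsemigroup of ((0, ∞), +) and let A be a u × v matrix with entries from ℚ, where u, v ∈ ℕ, which is image partition regular near 0 over S. Then I(A) = {p ∈ 0⁺(S) : for every P ∈ p there exists x⃗ ∈ S^v such that all entries of Ax⃗ are in P} is a subsemigroup of (0⁺(S), +): for all p, q ∈ I(A), p + q ∈ I(A). -/
/-- The semigroup operation `+` on the ultrafilters `βS_d` on `S ⊆ ℝ`:
`B ∈ p + q` iff `{x ∈ S : {y ∈ S : x + y ∈ B} ∈ q} ∈ p`. -/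
def uaddS (S : Set ℝ) (hS : ∀ a ∈ S, ∀ b ∈ S, a + b ∈ S)
    (p q : Ultrafilter S) : Ultrafilter S :=
  p.bind fun x => q.map fun y => (⟨x.1 + y.1, hS x.1 x.2 y.1 y.2⟩ : S)

/-- `0⁺(S)`: the ultrafilters `p` on `S` with `(0, r) ∩ S ∈ p` for every `r > 0`. -/
def zeroPlus (S : Set ℝ) : Set (Ultrafilter S) :=
  {p | ∀ r : ℝ, 0 < r → {s : S | (s : ℝ) < r} ∈ p}

/-- A `u × v` matrix `A` over ℚ is image partition regular near 0 over `S`. -/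
def IPRNearZero {u v : ℕ} (S : Set ℝ) (A : Matrix (Fin u) (Fin v) ℚ) : Prop :=
  ∀ (r : ℕ) (E : Fin r → Set ℝ), (∀ i, E i ⊆ S) → (∀ s ∈ S, ∃ i, s ∈ E i) →
    ∀ ε > (0 : ℝ),
      ∃ (i : Fin r) (x : Fin v → ℝ), (∀ j, x j ∈ S) ∧
        ∀ a : Fin u, (A.map ((↑) : ℚ → ℝ)).mulVec x a ∈ E i ∩ Set.Ioo 0 ε

/-- `I(A) = {p ∈ 0⁺(S) : for every P ∈ p there is x⃗ ∈ S^v such that all entries of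
`Ax⃗` are in P}`. -/
def IA {u v : ℕ} (S : Set ℝ) (A : Matrix (Fin u) (Fin v) ℚ) : Set (Ultrafilter S) :=
  {p | p ∈ zeroPlus S ∧ ∀ P ∈ p, ∃ x : Fin v → S,
    ∀ a : Fin u, ∃ s ∈ P, ((s : ℝ) = (A.map ((↑) : ℚ → ℝ)).mulVec (fun j => (x j : ℝ)) a)}

/-- For a dense subsemigroup `S` of `((0, ∞), +)` and a finite `u × v`
matrix `A` over ℚ that is image partition regular near 0 over `S`, the set `I(A)` is a
subsemigroup of `(0⁺(S), +)`. -/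
theorem IA_subsemigroup (S : Set ℝ)
    (hSpos : S ⊆ Set.Ioi 0)
    (hSadd : ∀ a ∈ S, ∀ b ∈ S, a + b ∈ S)
    (hSdense : ∀ x ∈ Set.Ioi (0 : ℝ), ∀ ε > 0, ∃ s ∈ S, |x - s| < ε)
    (u v : ℕ) (A : Matrix (Fin u) (Fin v) ℚ) (hA : IPRNearZero S A) :
    ∀ p ∈ IA S A, ∀ q ∈ IA S A, uaddS S hSadd p q ∈ IA S A := by
  intro p hp q hq
  obtain ⟨hp0, hp⟩ := hp
  obtain ⟨hq0, hq⟩ := hq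
  have key : ∀ B : Set S, B ∈ uaddS S hSadd p q ↔
      {x : S | {y : S | (⟨x.1 + y.1, hSadd x.1 x.2 y.1 y.2⟩ : S) ∈ B} ∈ q} ∈ p :=
    fun B => Iff.rfl
  refine ⟨?_, ?_⟩
  · intro r hr
    rw [key]
    filter_upwards [hp0 (r / 2) (by positivity)] with x hx
    show _ ∈ q
    filter_upwards [hq0 (r / 2) (by positivity)] with y hy
    have hx' : (x : ℝ) < r / 2 := hx
    have hy' : (y : ℝ) < r / 2 := hy
    show (x : ℝ) + (y : ℝ) < r
    linarith
  · intro B hB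
    rw [key] at hB
    obtain ⟨x, hx⟩ := hp _ hB
    choose s hs hsx using hx
    have hD : (⋂ a : Fin u,
        {y : S | (⟨(s a).1 + y.1, hSadd (s a).1 (s a).2 y.1 y.2⟩ : S) ∈ B}) ∈ (q : Filter S) :=
      Filter.iInter_mem.2 fun a => hs a
    obtain ⟨y, hy⟩ := hq _ hD
    choose t ht hty using hy
    refine ⟨fun j => ⟨(x j).1 + (y j).1, hSadd _ (x j).2 _ (y j).2⟩, fun a => ?_⟩
    refine ⟨_, Set.mem_iInter.1 (ht a) a, ?_⟩
    have : (fun j => (x j : ℝ) + (y j : ℝ)) = (fun j => (x j : ℝ)) + (fun j => (y j : ℝ)) := rfl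
    simp only [this, Matrix.mulVec_add, Pi.add_apply, hsx, hty]
end

section
/- Let S be a dense subsemigroup of ((0, ∞), +) that is also closed under multiplication, let u, v ∈ ℕ, and let A be a u × v matrix with entries from ℚ which is image partition regular near 0 over S. Then I(A) = {p ∈ 0⁺(S) : for every P ∈ p there exists x⃗ ∈ S^v such that all entries of Ax⃗ are in P} is a two-sided ideal of (0⁺(S), ·): for every p ∈ 0⁺(S) and q ∈ I(A), both p · q ∈ I(A) and q · p ∈ I(A). -/
/-- The semigroup operation `·` on the ultrafilters `βS_d` on `S ⊆ ℝ`: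
`B ∈ p · q` iff `{x ∈ S : {y ∈ S : x · y ∈ B} ∈ q} ∈ p`. -/
def umulS (S : Set ℝ) (hS : ∀ a ∈ S, ∀ b ∈ S, a * b ∈ S)
    (p q : Ultrafilter S) : Ultrafilter S :=
  p.bind fun x => q.map fun y => (⟨x.1 * y.1, hS x.1 x.2 y.1 y.2⟩ : S)

theorem mem_umulS_iff (S : Set ℝ) (hS : ∀ a ∈ S, ∀ b ∈ S, a * b ∈ S)
    (p q : Ultrafilter S) (B : Set S) :
    B ∈ umulS S hS p q ↔
      {x : S | {y : S | (⟨x.1 * y.1, hS x.1 x.2 y.1 y.2⟩ : S) ∈ B} ∈ q} ∈ p :=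
  Iff.rfl

theorem umulS_zeroPlus (S : Set ℝ) (hSpos : S ⊆ Set.Ioi 0)
    (hS : ∀ a ∈ S, ∀ b ∈ S, a * b ∈ S)
    (p q : Ultrafilter S) (hq : q ∈ zeroPlus S) : umulS S hS p q ∈ zeroPlus S := by
  intro r hr
  rw [mem_umulS_iff]
  refine Filter.mem_of_superset Filter.univ_mem ?_
  intro x _
  have hx : 0 < (x : ℝ) := hSpos x.2
  refine Filter.mem_of_superset (hq (r / x) (div_pos hr hx)) ?_
  intro y hy
  have hy' : (y : ℝ) < r / x := hy
  rw [lt_div_iff₀ hx] at hy'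
  change (x : ℝ) * y < r
  linarith

/-- For a dense multiplicatively closed subsemigroup `S` of `((0, ∞), +)`
and a finite `u × v` matrix `A` over ℚ that is image partition regular near 0 over `S`,
the set `I(A)` is a two-sided ideal of `(0⁺(S), ·)`. -/
theorem IA_two_sided_ideal (S : Set ℝ)
    (hSpos : S ⊆ Set.Ioi 0)
    (hSadd : ∀ a ∈ S, ∀ b ∈ S, a + b ∈ S)
    (hSmul : ∀ a ∈ S, ∀ b ∈ S, a * b ∈ S)
    (hSdense : ∀ x ∈ Set.Ioi (0 : ℝ), ∀ ε > 0, ∃ s ∈ S, |x - s| < ε)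
    (u v : ℕ) (A : Matrix (Fin u) (Fin v) ℚ) (hA : IPRNearZero S A) :
    ∀ p ∈ zeroPlus S, ∀ q ∈ IA S A,
      umulS S hSmul p q ∈ IA S A ∧ umulS S hSmul q p ∈ IA S A := by
  intro p hp q hq
  have scale : ∀ (c : ℝ) (x : Fin v → ℝ) (a : Fin u),
      (A.map ((↑) : ℚ → ℝ)).mulVec (fun j => c * x j) a
        = c * (A.map ((↑) : ℚ → ℝ)).mulVec x a := by
    intro c x a
    have h := congrFun (Matrix.mulVec_smul (A.map ((↑) : ℚ → ℝ)) c x) a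
    simpa [Pi.smul_def] using h
  refine ⟨⟨umulS_zeroPlus S hSpos hSmul p q hq.1, ?_⟩,
    ⟨umulS_zeroPlus S hSpos hSmul q p hp, ?_⟩⟩
  · intro B hB
    rw [mem_umulS_iff] at hB
    obtain ⟨c, hc⟩ := p.nonempty_of_mem hB
    obtain ⟨x, hx⟩ := hq.2 _ hc
    refine ⟨fun j => ⟨c.1 * (x j).1, hSmul _ c.2 _ (x j).2⟩, fun a => ?_⟩
    obtain ⟨s, hs, hsa⟩ := hx a
    refine ⟨_, hs, ?_⟩
    change (c : ℝ) * s = _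
    rw [hsa]
    exact (scale c (fun j => (x j : ℝ)) a).symm
  · intro B hB
    rw [mem_umulS_iff] at hB
    obtain ⟨x, hx⟩ := hq.2 _ hB
    choose s hs hsa using hx
    have hI : (⋂ a, {y : S | (⟨(s a).1 * y.1, hSmul _ (s a).2 _ y.2⟩ : S) ∈ B}) ∈ (p : Filter S) :=
      Filter.iInter_mem.2 hs
    obtain ⟨c, hc⟩ := p.nonempty_of_mem hI
    rw [Set.mem_iInter] at hc
    refine ⟨fun j => ⟨c.1 * (x j).1, hSmul _ c.2 _ (x j).2⟩, fun a => ?_⟩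
    refine ⟨_, hc a, ?_⟩
    change (s a : ℝ) * c = _
    rw [hsa, mul_comm]
    exact (scale c (fun j => (x j : ℝ)) a).symm
end
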